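/- arXiv:1411.6243 — 2 statements merged into one kernel-verified Lean document; each statement's English description precedes it below -/
import Mathlib

section
/- Let F be a real inner product space, let L₁, …, L_N : F → ℝ be convex differentiable functions, let λ > 0 and let m, n be positive reals. Suppose f minimizes g ↦ (1/(mn)) Σ_{j=1}^N L_j(g) + (λ/2)‖g‖₂² over F, and for some index i′ ∈ {1,…,N}, f' minimizes g ↦ (1/(mn)) Σ_{j≠i′} L_j(g) + (λ/2)‖g‖₂² over F. Then λ‖f − f'‖₂² ≤ (1/(mn)) (L_{i′}(f') − L_{i′}(f)). (Key inequality, equations (13)–(17), in the proof of the stability Theorem.) -/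
open scoped BigOperators

/-!
Strong convexity replaces the Bregman divergences of the regularizer: a `lam`-strongly convex
objective exceeds its minimum by at least `lam / 2` times the squared distance to the minimizer.
Applying this to each of the two objectives at the minimizer of the other and adding, everything
cancels except the increment of the term in which the objectives differ.
-/

section ConvexSum

variable {𝕜 E β ι : Type*} [Semiring 𝕜] [PartialOrder 𝕜] [AddCommMonoid E] [SMul 𝕜 E]
  [AddCommMonoid β] [PartialOrder β] [IsOrderedAddMonoid β] [Module 𝕜 β]

theorem convexOn_finset_sum {C : Set E} {t : Finset ι} {f : ι → E → β} (hC : Convex 𝕜 C)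
    (hf : ∀ i ∈ t, ConvexOn 𝕜 C (f i)) : ConvexOn 𝕜 C fun x ↦ ∑ i ∈ t, f i x := by
  simpa only [Finset.sum_fn] using
    Finset.sum_induction f (ConvexOn 𝕜 C) (fun _ _ ↦ ConvexOn.add) (convexOn_const 0 hC) hf

end ConvexSum

section UniformConvex

variable {E : Type*} [NormedAddCommGroup E] [NormedSpace ℝ E] {C : Set E} {φ ψ : ℝ → ℝ}
  {f g : E → ℝ} {x y : E}

theorem uniformConvexOn_modulus_le_sub_of_isMinOn (hf : UniformConvexOn C φ f) (hx : x ∈ C)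
    (hmin : IsMinOn f C x) (hy : y ∈ C) : φ ‖x - y‖ ≤ f y - f x := by
  have scaled_le : ∀ a ∈ Set.Ioo (0 : ℝ) 1, a * φ ‖x - y‖ ≤ f y - f x := by
    rintro a ⟨ha₀, ha₁⟩
    have hb : 0 < 1 - a := sub_pos.2 ha₁
    have hab : a + (1 - a) = 1 := add_sub_cancel a 1
    have min_le : f x ≤ f (a • x + (1 - a) • y) := hmin (hf.1 hx hy ha₀.le hb.le hab)
    have le_chord := hf.2 hx hy ha₀.le hb.le hab
    simp only [smul_eq_mul] at le_chord
    refine le_of_mul_le_mul_left ?_ hb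
    linarith
  have tendsto_scaled : Filter.Tendsto (fun a : ℝ ↦ a * φ ‖x - y‖) (nhdsWithin 1 (Set.Iio 1))
      (nhds (1 * φ ‖x - y‖)) :=
    (Filter.tendsto_id.mono_left nhdsWithin_le_nhds).mul_const _
  rw [one_mul] at tendsto_scaled
  exact le_of_tendsto tendsto_scaled
    (Filter.mem_of_superset (Ioo_mem_nhdsLT zero_lt_one) scaled_le)

theorem uniformConvexOn_modulus_add_modulus_le_of_isMinOn (hf : UniformConvexOn C φ f)
    (hg : UniformConvexOn C ψ g) (hx : x ∈ C) (hy : y ∈ C) (hfx : IsMinOn f C x)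
    (hgy : IsMinOn g C y) :
    φ ‖x - y‖ + ψ ‖x - y‖ ≤ (f y - g y) - (f x - g x) := by
  have f_growth : φ ‖x - y‖ ≤ f y - f x :=
    uniformConvexOn_modulus_le_sub_of_isMinOn hf hx hfx hy
  have g_growth : ψ ‖x - y‖ ≤ g x - g y :=
    norm_sub_rev y x ▸ uniformConvexOn_modulus_le_sub_of_isMinOn hg hy hgy hx
  linarith

end UniformConvex

section InnerProduct

variable {F : Type*} [NormedAddCommGroup F] [InnerProductSpace ℝ F]

theorem strongConvexOn_add_sq_norm {C : Set F} {f : F → ℝ} (hf : ConvexOn ℝ C f) (lam : ℝ) :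
    StrongConvexOn C lam fun x ↦ f x + lam / 2 * ‖x‖ ^ 2 :=
  strongConvexOn_iff_convex.2 <| by simpa only [add_sub_cancel_right] using hf

theorem minimizer_key_inequality_general {ι : Type*} [DecidableEq ι] {C : Set F} {t : Finset ι}
    {L : ι → F → ℝ} {lam c : ℝ} (hc : 0 ≤ c) (hconv : ∀ j ∈ t, ConvexOn ℝ C (L j))
    {i' : ι} (hi' : i' ∈ t) {f f' : F} (hfC : f ∈ C) (hfC' : f' ∈ C)
    (hf : IsMinOn (fun g ↦ c * ∑ j ∈ t, L j g + lam / 2 * ‖g‖ ^ 2) C f)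
    (hf' : IsMinOn (fun g ↦ c * ∑ j ∈ t.erase i', L j g + lam / 2 * ‖g‖ ^ 2) C f') :
    lam * ‖f - f'‖ ^ 2 ≤ c * (L i' f' - L i' f) := by
  have objective_strongConvexOn (u : Finset ι) (hu : u ⊆ t) :
      StrongConvexOn C lam fun g ↦ c * ∑ j ∈ u, L j g + lam / 2 * ‖g‖ ^ 2 :=
    strongConvexOn_add_sq_norm
      ((convexOn_finset_sum (hconv i' hi').1 fun j hj ↦ hconv j (hu hj)).smul hc) lam
  have growth := uniformConvexOn_modulus_add_modulus_le_of_isMinOn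
    (objective_strongConvexOn t subset_rfl)
    (objective_strongConvexOn (t.erase i') (t.erase_subset i')) hfC hfC' hf hf'
  simp only [← Finset.add_sum_erase t _ hi'] at growth
  linarith

end InnerProduct

/-- **Key inequality (equations (13)–(17)) in the proof of the stability theorem.**
Let `F` be a real inner product space, `L j : F → ℝ` convex differentiable
functions (`j = 1, …, N`), `lam > 0` and `m, n` positive reals.  If `f`
minimizes `g ↦ (1/(m*n)) * ∑ j, L j g + (lam/2) * ‖g‖²` and `f'` minimizes the
same objective with the single term `i'` removed, then
`lam * ‖f - f'‖² ≤ (1/(m*n)) * (L i' f' - L i' f)`. -/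
theorem minimizer_key_inequality
    {F : Type*} [NormedAddCommGroup F] [InnerProductSpace ℝ F]
    {N : ℕ} (L : Fin N → F → ℝ) (lam m n : ℝ)
    (hlam : 0 < lam) (hm : 0 < m) (hn : 0 < n)
    (hconv : ∀ j, ConvexOn ℝ Set.univ (L j))
    (hdiff : ∀ j, Differentiable ℝ (L j))
    (i' : Fin N) (f f' : F)
    (hf : ∀ g : F,
      1 / (m * n) * ∑ j, L j f + lam / 2 * ‖f‖ ^ 2
        ≤ 1 / (m * n) * ∑ j, L j g + lam / 2 * ‖g‖ ^ 2)
    (hf' : ∀ g : F,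
      1 / (m * n) * ∑ j ∈ Finset.univ.erase i', L j f' + lam / 2 * ‖f'‖ ^ 2
        ≤ 1 / (m * n) * ∑ j ∈ Finset.univ.erase i', L j g + lam / 2 * ‖g‖ ^ 2) :
    lam * ‖f - f'‖ ^ 2 ≤ 1 / (m * n) * (L i' f' - L i' f) := by
  exact minimizer_key_inequality_general (by positivity) (fun j _ ↦ hconv j) (Finset.mem_univ i')
    (Set.mem_univ f) (Set.mem_univ f') (fun g _ ↦ hf g) fun g _ ↦ hf' g
end

section
/- Under the structure regularization framework (with minimizer f of the structure-regularized and L₂-weight-regularized objective, and f^{∖i′} the minimizer with the single mini-sample term i′ removed), assuming each sample-wise loss L_τ(·, z′_j) is convex and differentiable on F, the evaluation is ρ-admissible, and the point-wise cost is τ-smooth, the distance between the two minimizers satisfies ‖f − f^{∖i′}‖₂ ≤ (ρτ/(mλα)) ‖x′_{i′}‖₂, where x′_{i′} is the input of the removed mini-sample (which has structure complexity n/α). (Equation (18) in the proof of Theorem 2.) -/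
open scoped BigOperators

open scoped NNReal Topology

/-!
Convexity of the losses makes both objectives `lam`-strongly convex, so each of them grows at
least like `lam / 2 * ‖g - g₀‖ ^ 2` away from its minimizer `g₀`. Evaluating each growth bound at
the other minimizer and adding gives `lam * ‖f - fminus‖ ^ 2 ≤ D fminus - D f`, where the
difference `D` of the two objectives is just the removed term. Admissibility and smoothness make
that term Lipschitz with constant proportional to `‖∑ k, x' i' k‖`, and one factor
`‖f - fminus‖` cancels.
-/

section GeneralFacts

variable {ι E : Type*} {t : Finset ι}

lemma convexOn_finsetSum [AddCommGroup E] [Module ℝ E] {s : Set E} {u : ι → E → ℝ}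
    (hs : Convex ℝ s) (hu : ∀ i ∈ t, ConvexOn ℝ s (u i)) : ConvexOn ℝ s (∑ i ∈ t, u i) :=
  Finset.sum_induction u (ConvexOn ℝ s) (fun _ _ ha hb ↦ ha.add hb) (convexOn_const 0 hs) hu

lemma lipschitzOnWith_finsetSum {G : Type*} [PseudoEMetricSpace E] [SeminormedAddCommGroup G]
    {s : Set E} {u : ι → E → G} {K : ι → ℝ≥0} (hu : ∀ i ∈ t, LipschitzOnWith (K i) (u i) s) :
    LipschitzOnWith (∑ i ∈ t, K i) (fun x ↦ ∑ i ∈ t, u i x) s := by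
  induction t using Finset.cons_induction with
  | empty => simpa only [Finset.sum_empty] using (LipschitzWith.const (0 : G)).lipschitzOnWith
  | cons i t hi ih =>
    simp only [Finset.sum_cons]
    exact (hu i (Finset.mem_cons_self i t)).add
      (ih fun j hj ↦ hu j (Finset.mem_cons_of_mem hj))

end GeneralFacts

section StrongConvexity

variable {E : Type*} [NormedAddCommGroup E] [NormedSpace ℝ E] {s : Set E} {u v : E → ℝ} {x y : E}

lemma add_modulus_le_of_isMinOn {φ : ℝ → ℝ} (hu : UniformConvexOn s φ u) (hx : x ∈ s)
    (hmin : IsMinOn u s x) (hy : y ∈ s) : u x + φ ‖x - y‖ ≤ u y := by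
  have segment_bound : ∀ a ∈ Set.Ioo (0 : ℝ) 1, (1 - a) * φ ‖x - y‖ ≤ u y - u x := by
    rintro a ⟨ha₀, ha₁⟩
    have hconv := hu.2 hx hy (sub_nonneg.2 ha₁.le) ha₀.le (sub_add_cancel 1 a)
    have hle : u x ≤ u ((1 - a) • x + a • y) :=
      hmin (hu.1 hx hy (sub_nonneg.2 ha₁.le) ha₀.le (sub_add_cancel 1 a))
    simp only [smul_eq_mul] at hconv
    refine le_of_mul_le_mul_left ?_ ha₀
    linarith
  have tendsto_modulus :
      Filter.Tendsto (fun a : ℝ ↦ (1 - a) * φ ‖x - y‖) (𝓝[>] 0) (𝓝 (φ ‖x - y‖)) := by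
    have hcont : Continuous fun a : ℝ ↦ (1 - a) * φ ‖x - y‖ := by fun_prop
    simpa using (hcont.tendsto 0).mono_left nhdsWithin_le_nhds
  have hφ : φ ‖x - y‖ ≤ u y - u x :=
    le_of_tendsto tendsto_modulus
      (Filter.mem_of_superset (Ioo_mem_nhdsGT one_pos) segment_bound)
  linarith

lemma norm_sub_le_of_isMinOn_of_lipschitzOnWith_sub {μ : ℝ} {K : ℝ≥0} (hμ : 0 < μ)
    (hu : StrongConvexOn s μ u) (hv : StrongConvexOn s μ v) (huv : LipschitzOnWith K (u - v) s)
    (hx : x ∈ s) (hxu : IsMinOn u s x) (hy : y ∈ s) (hyv : IsMinOn v s y) :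
    ‖x - y‖ ≤ K / μ := by
  have growth_u : u x + μ / 2 * ‖x - y‖ ^ 2 ≤ u y := add_modulus_le_of_isMinOn hu hx hxu hy
  have growth_v : v y + μ / 2 * ‖x - y‖ ^ 2 ≤ v x := by
    rw [norm_sub_rev]
    exact add_modulus_le_of_isMinOn hv hy hyv hx
  have lipschitz : (u - v) y - (u - v) x ≤ K * ‖x - y‖ := by
    rw [norm_sub_rev]
    exact (le_abs_self _).trans (huv.norm_sub_le hy hx)
  simp only [Pi.sub_apply] at lipschitz
  have sq_bound : μ * ‖x - y‖ * ‖x - y‖ ≤ K * ‖x - y‖ := by linarith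
  rw [le_div_iff₀' hμ]
  obtain h | h := (norm_nonneg (x - y)).eq_or_lt
  · simp only [← h, mul_zero, NNReal.coe_nonneg]
  · exact le_of_mul_le_mul_right sq_bound h

end StrongConvexity

section Regularization

variable {F ι : Type*} [NormedAddCommGroup F]

/-- The `L₂`-regularized empirical risk `w * ∑ i ∈ t, L i g + (lam / 2) * ‖g‖ ^ 2` of `g`, with a
common weight `w` on the losses indexed by `t`. Keeping `w` separate from `t` lets a loss be removed
without renormalizing the others. -/
noncomputable def regularizedRisk (w lam : ℝ) (t : Finset ι) (L : ι → F → ℝ) (g : F) : ℝ :=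
  w * ∑ i ∈ t, L i g + lam / 2 * ‖g‖ ^ 2

variable {w lam : ℝ} {t : Finset ι} {L : ι → F → ℝ}

lemma regularizedRisk_sub_erase [DecidableEq ι] {i : ι} (hi : i ∈ t) :
    regularizedRisk w lam t L - regularizedRisk w lam (t.erase i) L = w • L i := by
  ext g
  simp only [regularizedRisk, Pi.sub_apply, Pi.smul_apply, smul_eq_mul,
    ← Finset.add_sum_erase t (L · g) hi]
  ring

variable [InnerProductSpace ℝ F] {s : Set F}

lemma strongConvexOn_regularizedRisk (hw : 0 ≤ w) (hs : Convex ℝ s)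
    (hL : ∀ i ∈ t, ConvexOn ℝ s (L i)) : StrongConvexOn s lam (regularizedRisk w lam t L) := by
  rw [strongConvexOn_iff_convex]
  simpa only [regularizedRisk, add_sub_cancel_right, Finset.sum_apply, smul_eq_mul] using
    (convexOn_finsetSum hs hL).smul hw

theorem norm_sub_le_of_isMinOn_regularizedRisk_erase [DecidableEq ι] {K : ℝ≥0} {i : ι} {f f' : F}
    (hw : 0 ≤ w) (hlam : 0 < lam) (hL : ∀ j ∈ t, ConvexOn ℝ s (L j)) (hi : i ∈ t)
    (hLi : LipschitzOnWith K (L i) s)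
    (hfs : f ∈ s) (hf : IsMinOn (regularizedRisk w lam t L) s f)
    (hfs' : f' ∈ s) (hf' : IsMinOn (regularizedRisk w lam (t.erase i) L) s f') :
    ‖f - f'‖ ≤ w * K / lam := by
  have hs : Convex ℝ s := (hL i hi).1
  have removed_lipschitz : LipschitzOnWith (‖w‖₊ * K)
      (regularizedRisk w lam t L - regularizedRisk w lam (t.erase i) L) s := by
    rw [regularizedRisk_sub_erase hi]
    exact (lipschitzWith_smul w).comp_lipschitzOnWith hLi
  have hbound := norm_sub_le_of_isMinOn_of_lipschitzOnWith_sub hlam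
    (strongConvexOn_regularizedRisk hw hs hL)
    (strongConvexOn_regularizedRisk hw hs fun j hj ↦ hL j (Finset.mem_of_mem_erase hj))
    removed_lipschitz hfs hf hfs' hf'
  rwa [NNReal.coe_mul, coe_nnnorm, Real.norm_of_nonneg hw] at hbound

end Regularization

section SampleLoss

variable {F κ Y : Type*} [Fintype κ]

/-- The sample-wise loss `L_τ(g, (x, y)) = ∑ k, c (g(x, k)) (y k)`. The input `x` enters only
through the predictions `pred g k = g(x, k)`, so it is not a separate argument. -/
def sampleLoss (c : ℝ → Y → ℝ) (pred : F → κ → ℝ) (y : κ → Y) (g : F) : ℝ :=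
  ∑ k, c (pred g k) (y k)

lemma lipschitzOnWith_sampleLoss [PseudoEMetricSpace F] {s : Set F} {c : ℝ → Y → ℝ}
    {pred : F → κ → ℝ} {y : κ → Y} {τ K : ℝ≥0} (hc : ∀ k, LipschitzWith τ (c · (y k)))
    (hpred : ∀ k, LipschitzOnWith K (pred · k) s) :
    LipschitzOnWith (Fintype.card κ * (τ * K)) (sampleLoss c pred y) s := by
  have hsum := lipschitzOnWith_finsetSum (t := Finset.univ)
    fun k _ ↦ (hc k).comp_lipschitzOnWith (hpred k)
  rwa [Finset.sum_const, Finset.card_univ, nsmul_eq_mul] at hsum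

end SampleLoss

theorem minimizer_distance_bound_general
    {F E Y : Type*} [NormedAddCommGroup F] [InnerProductSpace ℝ F] [SeminormedAddCommGroup E]
    {s : Set F} {m α n n' : ℕ} (hn : 0 < n) (hdiv : n = α * n')
    {eval : F → (Fin n' → E) → Fin n' → ℝ} {ρ : ℝ} (hρ : 0 ≤ ρ)
    (hadm : ∀ g ∈ s, ∀ g' ∈ s, ∀ x k,
      |eval g x k - eval g' x k| ≤ ρ * ‖g - g'‖ * ‖∑ k', x k'‖)
    {c : ℝ → Y → ℝ} {τ : ℝ} (hsmooth : ∀ y₁ y₂ ystar, |c y₁ ystar - c y₂ ystar| ≤ τ * |y₁ - y₂|)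
    {x' : Fin m × Fin α → Fin n' → E} {y' : Fin m × Fin α → Fin n' → Y}
    (hconv : ∀ p, ConvexOn ℝ s (sampleLoss c (eval · (x' p)) (y' p)))
    {lam : ℝ} (hlam : 0 < lam) {i' : Fin m × Fin α} {f fminus : F}
    (hfs : f ∈ s) (hf : IsMinOn (regularizedRisk (1 / ((m : ℝ) * n)) lam Finset.univ
      fun p ↦ sampleLoss c (eval · (x' p)) (y' p)) s f)
    (hfminus_s : fminus ∈ s)
    (hfminus : IsMinOn (regularizedRisk (1 / ((m : ℝ) * n)) lam (Finset.univ.erase i')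
      fun p ↦ sampleLoss c (eval · (x' p)) (y' p)) s fminus) :
    ‖f - fminus‖ ≤ ρ * τ / ((m : ℝ) * lam * (α : ℝ)) * ‖∑ k, x' i' k‖ := by
  have hn' : 0 < n' := Nat.pos_of_mul_pos_left (hdiv ▸ hn)
  have hτ : 0 ≤ τ := by simpa using (abs_nonneg _).trans (hsmooth 1 0 (y' i' ⟨0, hn'⟩))
  lift ρ to ℝ≥0 using hρ
  lift τ to ℝ≥0 using hτ
  have cost_lipschitz (k : Fin n') : LipschitzWith τ (c · (y' i' k)) :=
    .of_dist_le_mul fun y₁ y₂ ↦ hsmooth y₁ y₂ (y' i' k)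
  have pred_lipschitz (k : Fin n') :
      LipschitzOnWith (ρ * ‖∑ k, x' i' k‖₊) (eval · (x' i') k) s :=
    .of_dist_le_mul fun g hg g' hg' ↦ by
      simpa only [dist_eq_norm, Real.norm_eq_abs, NNReal.coe_mul, coe_nnnorm, mul_right_comm]
        using hadm g hg g' hg' (x' i') k
  refine (norm_sub_le_of_isMinOn_regularizedRisk_erase (by positivity) hlam (fun p _ ↦ hconv p)
    (Finset.mem_univ i') (lipschitzOnWith_sampleLoss cost_lipschitz pred_lipschitz)
    hfs hf hfminus_s hfminus).trans_eq ?_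
  simp only [hdiv, Fintype.card_fin, NNReal.coe_mul, NNReal.coe_natCast, coe_nnnorm, Nat.cast_mul]
  field_simp

/-- **Equation (18) in the proof of Theorem 2.**
Under the structure regularization framework: the training set consists of `m`
samples of structure complexity `n = α * n'`, decomposed into mini-samples
`(x' p, y' p)` of structure complexity `n'` indexed by `p : Fin m × Fin α`.
The function space `F` is a real inner product space with a `ρ`-admissible
evaluation `eval`, the point-wise cost `cτ` is convex and `τ`-smooth, and each
sample-wise loss `g ↦ L_τ(g, z'_p)` is convex and differentiable.  If `f`
minimizes the structure- and `L₂`-weight-regularized objective and `fminus`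
minimizes the same objective with the single mini-sample term `i'` removed,
then `‖f - fminus‖₂ ≤ (ρ * τ / (m * lam * α)) * ‖x'_{i'}‖₂`. -/
theorem minimizer_distance_bound
    {F : Type*} [NormedAddCommGroup F] [InnerProductSpace ℝ F]
    (d m α n n' : ℕ) (hm : 0 < m) (hα : 0 < α) (hn : 0 < n)
    (hdiv : n = α * n')
    (eval : F → (t : ℕ) → (Fin t → EuclideanSpace ℝ (Fin d)) → Fin t → ℝ)
    (ρ : ℝ) (hρ : 0 ≤ ρ)
    (hadm : ∀ (g g' : F) (t : ℕ) (x : Fin t → EuclideanSpace ℝ (Fin d)) (k : Fin t),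
      |eval g t x k - eval g' t x k| ≤ ρ * ‖g - g'‖ * ‖∑ k', x k'‖)
    (cτ : ℝ → ℝ → ℝ) (τ : ℝ)
    (hsmooth : ∀ y₁ y₂ ystar : ℝ, |cτ y₁ ystar - cτ y₂ ystar| ≤ τ * |y₁ - y₂|)
    (hcost_convex : ∀ ystar : ℝ, ConvexOn ℝ Set.univ (fun y : ℝ => cτ y ystar))
    (x' : Fin m × Fin α → Fin n' → EuclideanSpace ℝ (Fin d))
    (y' : Fin m × Fin α → Fin n' → ℝ)
    (hconv : ∀ p : Fin m × Fin α,
      ConvexOn ℝ Set.univ (fun g : F => ∑ k, cτ (eval g n' (x' p) k) (y' p k)))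
    (hdiff : ∀ p : Fin m × Fin α,
      Differentiable ℝ (fun g : F => ∑ k, cτ (eval g n' (x' p) k) (y' p k)))
    (lam : ℝ) (hlam : 0 < lam)
    (i' : Fin m × Fin α) (f fminus : F)
    (hf : ∀ g : F,
      1 / ((m : ℝ) * n) * ∑ p : Fin m × Fin α, ∑ k, cτ (eval f n' (x' p) k) (y' p k)
          + lam / 2 * ‖f‖ ^ 2
        ≤ 1 / ((m : ℝ) * n) * ∑ p : Fin m × Fin α, ∑ k, cτ (eval g n' (x' p) k) (y' p k)
          + lam / 2 * ‖g‖ ^ 2)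
    (hfminus : ∀ g : F,
      1 / ((m : ℝ) * n) * ∑ p ∈ Finset.univ.erase i', ∑ k, cτ (eval fminus n' (x' p) k) (y' p k)
          + lam / 2 * ‖fminus‖ ^ 2
        ≤ 1 / ((m : ℝ) * n) * ∑ p ∈ Finset.univ.erase i', ∑ k, cτ (eval g n' (x' p) k) (y' p k)
          + lam / 2 * ‖g‖ ^ 2) :
    ‖f - fminus‖ ≤ ρ * τ / ((m : ℝ) * lam * (α : ℝ)) * ‖∑ k, x' i' k‖ :=
  minimizer_distance_bound_general hn hdiv hρ (fun g _ g' _ ↦ hadm g g' n') hsmooth hconv hlam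
    (Set.mem_univ f) (isMinOn_univ_iff.2 hf) (Set.mem_univ fminus) (isMinOn_univ_iff.2 hfminus)
end
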